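/- Let K=(G,M,I) be a clarified formal context, let e be the order dimension of its Euler-poset and let d be the order dimension of its concept lattice. Then d ≤ e. -/

import Mathlib

/-!
A relation that is an intersection of `n` total preorders, each containing a partial order `s`
and with intersection exactly `s`, yields a realizer of size `n`: break the ties of every
preorder by one fixed linear extension of `s` (`exists_isRealizer_of_preorders`).

Let `L₁, …, Lₑ` be a realizer of the Euler-poset. Send a concept with extent `A` to the down-closures
of `A` in the chains `L₁, …, Lₑ`. The down-sets of a chain are totally ordered by inclusion, so
each coordinate is a total preorder on concepts, and it is monotone in `A`. Conversely, suppose that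
for extents `A`, `C` every down-closure of `A` lies in that of `C`. Given `g ∈ A` and `m` in the
intent of `C`, each `Lᵢ` puts `g` below some `h ∈ C`, which it puts below `m`; so `g` is below `m`
in all `Lᵢ`, that is `(g, m) ∈ I`, and hence `g ∈ C`. Thus the `e` preorders intersect to the
order of the concept lattice.

Since `orderDim` is an infimum in `ℕ`, with `sInf ∅ = 0`, it must also be known that the Euler-poset
has a finite realizer. The same tie-breaking lemma gives this for every finite poset, applied to
the preorders "`y ≤ z` implies `x ≤ z`", one for each element `z`. Clarification enters
only here, making the Euler-poset antisymmetric.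
-/

/- Common framework: formal contexts, derivations, concepts, one- and two-dimensional
Euler diagrams, linear extensions, realizers, order dimension, the Euler-poset,
the extended Euler-poset and standard examples. -/

namespace EulerFCA

variable {G M : Type}

/-- Derivation of a set of objects: the attributes shared by all of them. -/
def objDeriv (I : G → M → Prop) (A : Set G) : Set M := {m | ∀ g ∈ A, I g m}

/-- Derivation of a set of attributes: the objects having all of them. -/
def attrDeriv (I : G → M → Prop) (B : Set M) : Set G := {g | ∀ m ∈ B, I g m}

/-- A formal context is clarified if distinct objects have distinct derivations and
distinct attributes have distinct derivations. -/
def Clarified (I : G → M → Prop) : Prop :=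
  (∀ g h : G, objDeriv I {g} = objDeriv I {h} → g = h) ∧
  (∀ m n : M, attrDeriv I {m} = attrDeriv I {n} → m = n)

/-- A formal concept: a pair `(A, B)` with `A' = B` and `B' = A`. -/
def IsConcept (I : G → M → Prop) (A : Set G) (B : Set M) : Prop :=
  objDeriv I A = B ∧ attrDeriv I B = A

/-- A one-dimensional Euler diagram corresponding to a context with object set `G` and
attribute set `M`: the bijection `φ` onto the finite point set `P` is represented by the
injective map `point`, and the bijection `ψ` onto the finite set `J` of closed intervals
is represented by the (as intervals injective) pair of maps `lo`, `hi` with `lo m ≤ hi m`,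
interval `ψ m = [lo m, hi m]`. -/
structure EulerDiagram1D (G M : Type) where
  point : G → ℝ
  lo : M → ℝ
  hi : M → ℝ
  lo_le_hi : ∀ m, lo m ≤ hi m
  point_inj : Function.Injective point
  interval_inj : ∀ m n : M, lo m = lo n → hi m = hi n → m = n

/-- The closed interval assigned to an attribute. -/
def EulerDiagram1D.interval (E : EulerDiagram1D G M) (m : M) : Set ℝ :=
  Set.Icc (E.lo m) (E.hi m)

/-- The diagram corresponds to the context `(G, M, I)`: incidence is containment. -/
def Corresponds1D (E : EulerDiagram1D G M) (I : G → M → Prop) : Prop :=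
  ∀ g m, I g m ↔ E.point g ∈ E.interval m

/-- `x` is an endpoint of one of the intervals of the diagram. -/
def EulerDiagram1D.IsEndpoint (E : EulerDiagram1D G M) (x : ℝ) : Prop :=
  ∃ m, E.lo m = x ∨ E.hi m = x

/-- Conceptual: between any two distinct interval endpoints there lies a point. -/
def EulerDiagram1D.Conceptual (E : EulerDiagram1D G M) : Prop :=
  ∀ a b : ℝ, E.IsEndpoint a → E.IsEndpoint b → a < b →
    ∃ g : G, a < E.point g ∧ E.point g < b

/-- A two-dimensional Euler diagram: injective points in `ℝ²` and (as rectangles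
injective) closed axis-aligned rectangles `[lo m, hi m]`. -/
structure EulerDiagram2D (G M : Type) where
  point : G → ℝ × ℝ
  lo : M → ℝ × ℝ
  hi : M → ℝ × ℝ
  lo_le_hi₁ : ∀ m, (lo m).1 ≤ (hi m).1
  lo_le_hi₂ : ∀ m, (lo m).2 ≤ (hi m).2
  point_inj : Function.Injective point
  rect_inj : ∀ m n : M, lo m = lo n → hi m = hi n → m = n

/-- The 2D diagram corresponds to the context: incidence is containment of the
point in the rectangle. -/
def Corresponds2D (E : EulerDiagram2D G M) (I : G → M → Prop) : Prop :=
  ∀ g m, I g m ↔ ((E.point g).1 ∈ Set.Icc (E.lo m).1 (E.hi m).1 ∧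
                  (E.point g).2 ∈ Set.Icc (E.lo m).2 (E.hi m).2)

/-- `r` is a linear order relation (reflexive, antisymmetric, transitive, total). -/
def IsLinearOrderRel {X : Type} (r : X → X → Prop) : Prop :=
  (∀ x, r x x) ∧ (∀ x y, r x y → r y x → x = y) ∧
  (∀ x y z, r x y → r y z → r x z) ∧ (∀ x y, r x y ∨ r y x)

/-- `r` is a linear extension of `s`. -/
def IsLinearExtension {X : Type} (s r : X → X → Prop) : Prop :=
  IsLinearOrderRel r ∧ ∀ x y, s x y → r x y

/-- A family of `n` linear extensions of `s` whose intersection is `s`. -/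
def IsRealizer {X : Type} (s : X → X → Prop) {n : ℕ} (L : Fin n → X → X → Prop) : Prop :=
  (∀ i, IsLinearExtension s (L i)) ∧ (∀ x y, s x y ↔ ∀ i, L i x y)

/-- Order dimension: the least size of a realizer. -/
noncomputable def orderDim {X : Type} (s : X → X → Prop) : ℕ :=
  sInf {n : ℕ | ∃ L : Fin n → X → X → Prop, IsRealizer s L}

/-- The Euler-poset of a context `(G, M, I)`, on the disjoint union `G ⊕ M`:
`g < m` iff `(g,m) ∈ I`; `m₁ ≤ m₂` iff `m₁' ⊆ m₂'`; distinct objects are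
incomparable; no attribute below any object. -/
def EulerLE (I : G → M → Prop) : G ⊕ M → G ⊕ M → Prop
  | Sum.inl g, Sum.inl h => g = h
  | Sum.inl g, Sum.inr m => I g m
  | Sum.inr _, Sum.inl _ => False
  | Sum.inr m, Sum.inr n => ∀ g, I g m → I g n

/-- The underlying set of the extended Euler-poset: objects `g`, two copies
`g₁`, `g₂` of each object, attributes `m`, and special elements `a₁,…,a₄,b₁,…,b₄`. -/
inductive Ext (G M : Type) where
  | obj : G → Ext G M
  | obj1 : G → Ext G M
  | obj2 : G → Ext G M
  | attr : M → Ext G M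
  | a : Fin 4 → Ext G M
  | b : Fin 4 → Ext G M

/-- The order of the extended Euler-poset (the order generated by the conditions
i)–vi), all other pairs incomparable). -/
def ExtLE (I : G → M → Prop) : Ext G M → Ext G M → Prop
  | Ext.obj g, Ext.obj h => g = h
  | Ext.obj g, Ext.obj1 h => g = h
  | Ext.obj g, Ext.obj2 h => g = h
  | Ext.obj g, Ext.attr m => I g m
  | Ext.obj _, Ext.b _ => True
  | Ext.obj1 g, Ext.obj1 h => g = h
  | Ext.obj2 g, Ext.obj2 h => g = h
  | Ext.attr m, Ext.attr n => ∀ g, I g m → I g n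
  | Ext.attr _, Ext.b _ => True
  | Ext.a i, Ext.a j => i = j
  | Ext.a i, Ext.b j => i ≠ j
  | Ext.a i, Ext.obj1 _ => i = 0 ∨ i = 1
  | Ext.a i, Ext.obj2 _ => i = 2 ∨ i = 3
  | Ext.b i, Ext.b j => i = j
  | _, _ => False

/-- The standard example `S_d` on `{a₁,…,a_d} ⊕ {b₁,…,b_d}` with `aᵢ < b_j` iff `i ≠ j`
and no other strict comparabilities. -/
def StdLE (d : ℕ) : Fin d ⊕ Fin d → Fin d ⊕ Fin d → Prop
  | Sum.inl i, Sum.inl j => i = j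
  | Sum.inl i, Sum.inr j => i ≠ j
  | Sum.inr i, Sum.inr j => i = j
  | Sum.inr _, Sum.inl _ => False

/-- Embedding of `G ∪ M` into the extended Euler-poset. -/
def embGM : G ⊕ M → Ext G M := Sum.elim Ext.obj Ext.attr

/-- Restriction of a relation on the extended Euler-poset to `G ∪ M`. -/
def restrictGM (r : Ext G M → Ext G M → Prop) : (G ⊕ M) → (G ⊕ M) → Prop :=
  fun x y => r (embGM x) (embGM y)

end EulerFCA
namespace EulerFCA

/-- If a partial order is the intersection of `n` total preorders, then it has a realizer of
size `n`. -/
theorem exists_isRealizer_of_preorders {X : Type} (s : X → X → Prop) [IsPartialOrder X s] {n : ℕ}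
    (p : Fin n → X → X → Prop)
    (htrans : ∀ i x y z, p i x y → p i y z → p i x z)
    (htotal : ∀ i x y, p i x y ∨ p i y x)
    (hinter : ∀ x y, s x y ↔ ∀ i, p i x y) :
    ∃ L : Fin n → X → X → Prop, IsRealizer s L := by
  obtain ⟨t, ht, hst⟩ := extend_partialOrder s
  have tr : ∀ x y z, t x y → t y z → t x z := fun _ _ _ => _root_.trans
  have ta : ∀ x y, t x y → t y x → x = y := fun _ _ => antisymm
  have tt : ∀ x y, t x y ∨ t y x := total_of t
  -- `p i` strictly, or a tie in `p i` decided by `t`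
  let L : Fin n → X → X → Prop := fun i x y => p i x y ∧ (p i y x → t x y)
  have hext : ∀ i x y, s x y → L i x y := fun i x y h =>
    ⟨(hinter x y).1 h i, fun _ => hst x y h⟩
  refine ⟨L, fun i => ⟨⟨fun x => hext i x x (refl x), ?_, ?_, ?_⟩, hext i⟩,
    fun x y => ⟨fun h i => hext i x y h, fun h => (hinter x y).2 fun i => (h i).1⟩⟩
  · exact fun x y h k => ta x y (h.2 k.1) (k.2 h.1)
  · exact fun x y z h k => ⟨htrans i x y z h.1 k.1, fun hzx =>
      tr x y z (h.2 (htrans i y z x k.1 hzx)) (k.2 (htrans i z x y hzx h.1))⟩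
  · intro x y
    have h₁ := htotal i x y
    have h₂ := tt x y
    simp only [L]
    tauto

theorem exists_isRealizer_of_finite {X : Type} [Fintype X] (s : X → X → Prop)
    [IsPartialOrder X s] :
    ∃ n, ∃ L : Fin n → X → X → Prop, IsRealizer s L := by
  let e := (Fintype.equivFin X).symm
  refine ⟨Fintype.card X, exists_isRealizer_of_preorders s
    (fun i x y => s y (e i) → s x (e i)) ?_ ?_ ?_⟩
  · exact fun i x y z h k hz => h (k hz)
  · intro i x y
    tauto
  · refine fun x y => ⟨fun h i hy => _root_.trans h hy, fun h => ?_⟩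
    have hy := h (e.symm y)
    rw [e.apply_symm_apply] at hy
    exact hy (refl y)

theorem Clarified.isPartialOrder_eulerLE {G M : Type} {I : G → M → Prop} (hK : Clarified I) :
    IsPartialOrder (G ⊕ M) (EulerLE I) where
  refl x := by
    cases x <;> simp [EulerLE]
  trans x y z h k := by
    rcases x with x | x <;> rcases y with y | y <;> rcases z with z | z <;>
      simp_all [EulerLE]
  antisymm x y h k := by
    rcases x with x | x <;> rcases y with y | y <;> simp only [EulerLE] at h k
    · rw [h]
    · rw [hK.2 x y]
      ext g
      simpa [attrDeriv] using ⟨h g, k g⟩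

/-- A realizer of the Euler-poset induces a realizer of the concept lattice of the same size:
concepts are compared by the down-closures of their extents in each linear extension. -/
theorem IsRealizer.exists_concept {G M : Type} {I : G → M → Prop} {n : ℕ}
    {L : Fin n → G ⊕ M → G ⊕ M → Prop} (hL : IsRealizer (EulerLE I) L) :
    ∃ L' : Fin n → Concept G M I → Concept G M I → Prop,
      IsRealizer (fun c d : Concept G M I => c ≤ d) L' := by
  obtain ⟨hlin, hinter⟩ := hL
  -- inclusion of down-closures: each element of the extent of `c` is below one of that of `d`
  refine exists_isRealizer_of_preorders _
    (fun i c d => ∀ g ∈ c.extent, ∃ h ∈ d.extent, L i (.inl g) (.inl h)) ?_ ?_ ?_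
  · intro i c d f h k g hg
    obtain ⟨g', hg', hgg'⟩ := h g hg
    obtain ⟨g'', hg'', hg'g''⟩ := k g' hg'
    exact ⟨g'', hg'', (hlin i).1.2.2.1 _ _ _ hgg' hg'g''⟩
  · intro i c d
    by_contra! hcon
    obtain ⟨⟨g, hg, hgd⟩, ⟨h, hh, hhc⟩⟩ := hcon
    exact ((hlin i).1.2.2.2 (.inl g) (.inl h)).elim (hgd h hh) (hhc g hg)
  · intro c d
    refine ⟨fun hcd i g hg => ⟨g, Concept.extent_subset_extent_iff.2 hcd hg, (hlin i).1.1 _⟩,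
      fun hp => Concept.extent_subset_extent_iff.1 fun g hg => ?_⟩
    rw [← d.lowerPolar_intent]
    intro m hm
    refine (hinter (.inl g) (.inr m)).2 fun i => ?_
    obtain ⟨h, hh, hgh⟩ := hp i g hg
    rw [← d.upperPolar_extent] at hm
    exact (hlin i).1.2.2.1 _ _ _ hgh ((hlin i).2 (.inl h) (.inr m) (hm hh))

end EulerFCA

open EulerFCA in
/-- For a clarified context, the order dimension `d` of the concept
lattice is at most the order dimension `e` of the Euler-poset. -/
theorem statement8 {G M : Type} [Fintype G] [Fintype M] (I : G → M → Prop)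
    (hK : Clarified I) :
    orderDim (fun c d : Concept G M I => c ≤ d) ≤ orderDim (EulerLE I) := by
  have := hK.isPartialOrder_eulerLE
  have hne : {n : ℕ | ∃ L : Fin n → G ⊕ M → G ⊕ M → Prop, IsRealizer (EulerLE I) L}.Nonempty :=
    exists_isRealizer_of_finite (EulerLE I)
  obtain ⟨L, hL⟩ := Nat.sInf_mem hne
  exact Nat.sInf_le hL.exists_concept
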